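/- arXiv:2208.05118 — 4 statements merged into one kernel-verified Lean document; each statement's English description precedes it below -/
import Mathlib

section
/- The derivative α′ of the function α(x) := 1 + (M_s/x)(coth(γx) − 1/(γx)) satisfies lim_{x→0⁺} α′(x) = 0 and lim_{x→+∞} α′(x) = 0, for fixed parameters M_s > 0, γ > 0. -/
noncomputable def coth (y : ℝ) : ℝ := Real.cosh y / Real.sinh y

noncomputable def alpha (Ms γ x : ℝ) : ℝ := 1 + Ms / x * (coth (γ * x) - 1 / (γ * x))

/-!
Up to scaling, `alpha` is the even function `S(y) = (coth y - 1/y) / y`. At the origin the numerator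
and the denominator of `S(y) = (y cosh y - sinh y) / (y² sinh y)` both vanish to order three, so `S`
has a removable singularity there; its derivative then has a limit at `0`, which is `0` because the
derivative is odd. At infinity `coth' = 1 - coth²` writes `S'` as `1/y` times a bounded function.
-/

open Asymptotics Bornology Filter
open scoped Topology

lemma eq_zero_of_odd_of_tendsto_nhdsNE_zero {G H : Type*}
    [AddGroup G] [TopologicalSpace G] [ContinuousNeg G] [(𝓝[≠] (0 : G)).NeBot]
    [AddGroup H] [TopologicalSpace H] [ContinuousNeg H] [T2Space H] [IsAddTorsionFree H]
    {f : G → H} (hf : f.Odd) {c : H} (hc : Tendsto f (𝓝[≠] 0) (𝓝 c)) : c = 0 := by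
  have hneg : Tendsto (fun x : G ↦ -x) (𝓝[≠] 0) (𝓝[≠] 0) :=
    ((Homeomorph.neg G).map_punctured_nhds_eq 0).trans_le (by simp)
  have hc' : Tendsto f (𝓝[≠] 0) (𝓝 (-c)) := by
    simpa [Function.comp_def, hf _] using (hc.comp hneg).neg
  exact self_eq_neg.1 (tendsto_nhds_unique hc hc')

section EvenMeromorphic

variable {𝕜 E : Type*} [NontriviallyNormedField 𝕜] [NormedAddCommGroup E] [NormedSpace 𝕜 E]

lemma odd_deriv_of_even {f : 𝕜 → E} (hf : f.Even) : (deriv f).Odd := fun x ↦ by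
  rw [← neg_neg (deriv f (-x)), ← deriv_comp_neg, funext hf]

lemma meromorphicOrderAt_deriv_nonneg [CompleteSpace E] {f : 𝕜 → E} {x : 𝕜}
    (hf : MeromorphicAt f x) (ho : 0 ≤ meromorphicOrderAt f x) :
    0 ≤ meromorphicOrderAt (deriv f) x := by
  obtain ⟨g, hg, hfg⟩ := hf.meromorphicOrderAt_nonneg_iff.1 ho
  exact hf.deriv.meromorphicOrderAt_nonneg_iff.2 ⟨deriv g, hg.deriv, hfg.nhdsNE_deriv⟩

lemma tendsto_deriv_nhdsNE_zero_of_even [CharZero 𝕜] [CompleteSpace E] {f : 𝕜 → E}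
    (hf : MeromorphicAt f 0) (ho : 0 ≤ meromorphicOrderAt f 0) (heven : f.Even) :
    Tendsto (deriv f) (𝓝[≠] 0) (𝓝 0) := by
  obtain ⟨c, hc⟩ := tendsto_nhds_of_meromorphicOrderAt_nonneg hf.deriv
    (meromorphicOrderAt_deriv_nonneg hf ho)
  have : IsAddTorsionFree E := .of_isTorsionFree 𝕜 E
  rwa [eq_zero_of_odd_of_tendsto_nhdsNE_zero (odd_deriv_of_even heven) hc] at hc

end EvenMeromorphic

lemma coth_neg (y : ℝ) : coth (-y) = -coth y := by
  simp only [coth, Real.cosh_neg, Real.sinh_neg, div_neg]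

lemma hasDerivAt_coth {y : ℝ} (hy : y ≠ 0) : HasDerivAt coth (1 - coth y ^ 2) y := by
  have hs : Real.sinh y ≠ 0 := Real.sinh_ne_zero.2 hy
  have h : HasDerivAt coth _ y := (Real.hasDerivAt_cosh y).div (Real.hasDerivAt_sinh y) hs
  refine h.congr_deriv ?_
  rw [coth]
  field_simp

lemma isBigO_coth_one : coth =O[cobounded ℝ] (fun _ ↦ (1 : ℝ)) := by
  refine IsBigO.of_bound 2 ?_
  filter_upwards [tendsto_norm_cobounded_atTop.eventually_ge_atTop 1] with y hy
  have hs : 1 ≤ |Real.sinh y| := by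
    rw [Real.abs_sinh]
    exact hy.trans (Real.self_le_sinh_iff.2 (abs_nonneg y))
  have hc : |Real.cosh y| ≤ 2 * |Real.sinh y| := by
    refine abs_le_of_sq_le_sq ?_ (by positivity)
    nlinarith [Real.cosh_sq y, sq_abs (Real.sinh y)]
  rw [coth, norm_div, norm_one, mul_one]
  exact (div_le_iff₀ (by positivity)).2 hc

/-- The secant slope `L(y) / y` of the Langevin function `L(y) = coth y - 1 / y`, of which `alpha`
is an affine rescaling. -/
noncomputable def langevinSlope (y : ℝ) : ℝ := (coth y - 1 / y) / y

lemma alpha_eq_langevinSlope (Ms : ℝ) {γ : ℝ} (hγ : γ ≠ 0) (x : ℝ) :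
    alpha Ms γ x = 1 + Ms * γ * langevinSlope (γ * x) := by
  rw [alpha, langevinSlope]
  field_simp

lemma deriv_alpha (Ms : ℝ) {γ : ℝ} (hγ : γ ≠ 0) :
    deriv (alpha Ms γ) = fun x ↦ Ms * γ ^ 2 * deriv langevinSlope (γ * x) := by
  ext x
  rw [funext (alpha_eq_langevinSlope Ms hγ), deriv_const_add, deriv_const_mul_field,
    deriv_comp_mul_left, smul_eq_mul]
  ring

lemma even_langevinSlope : langevinSlope.Even := fun y ↦ by
  simp only [langevinSlope, coth_neg]
  ring

lemma langevinSlope_eq {y : ℝ} (hy : y ≠ 0) :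
    langevinSlope y = (y * Real.cosh y - Real.sinh y) / (y ^ 2 * Real.sinh y) := by
  have hs : Real.sinh y ≠ 0 := Real.sinh_ne_zero.2 hy
  rw [langevinSlope, coth]
  field_simp

lemma analyticOrderAt_sinh_zero : analyticOrderAt Real.sinh 0 = 1 :=
  Real.analyticAt_sinh.analyticOrderAt_eq_one_of_zero_deriv_ne_zero Real.sinh_zero (by simp)

lemma analyticOrderAt_mul_cosh_sub_sinh_zero :
    analyticOrderAt (fun y ↦ y * Real.cosh y - Real.sinh y) 0 = 3 := by
  have hderiv : deriv (fun y ↦ y * Real.cosh y - Real.sinh y) = id * Real.sinh := by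
    ext y
    simp
  refine (analyticOrderAt_deriv_eq_iff (n := 2) (by fun_prop) (by simp)).2 ?_
  rw [hderiv, analyticOrderAt_mul analyticAt_id Real.analyticAt_sinh, analyticOrderAt_id,
    analyticOrderAt_sinh_zero]
  norm_num

lemma analyticOrderAt_sq_mul_sinh_zero :
    analyticOrderAt (fun y ↦ y ^ 2 * Real.sinh y) 0 = 3 := by
  change analyticOrderAt (id ^ 2 * Real.sinh) 0 = 3
  rw [analyticOrderAt_mul (analyticAt_id.pow 2) Real.analyticAt_sinh,
    analyticOrderAt_pow analyticAt_id, analyticOrderAt_id, analyticOrderAt_sinh_zero]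
  norm_num

lemma meromorphicAt_langevinSlope_zero : MeromorphicAt langevinSlope 0 := by
  unfold langevinSlope coth
  fun_prop

lemma meromorphicOrderAt_langevinSlope_zero : meromorphicOrderAt langevinSlope 0 = 0 := by
  have hnum : AnalyticAt ℝ (fun y ↦ y * Real.cosh y - Real.sinh y) 0 := by fun_prop
  have hden : AnalyticAt ℝ (fun y ↦ y ^ 2 * Real.sinh y) 0 := by fun_prop
  have hquot : langevinSlope =ᶠ[𝓝[≠] 0]
      (fun y ↦ y * Real.cosh y - Real.sinh y) / fun y ↦ y ^ 2 * Real.sinh y := by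
    filter_upwards [self_mem_nhdsWithin] with y hy using langevinSlope_eq hy
  rw [meromorphicOrderAt_congr hquot, meromorphicOrderAt_div hnum.meromorphicAt
    hden.meromorphicAt, hnum.meromorphicOrderAt_eq, hden.meromorphicOrderAt_eq,
    analyticOrderAt_mul_cosh_sub_sinh_zero, analyticOrderAt_sq_mul_sinh_zero]
  rfl

lemma tendsto_deriv_langevinSlope_nhdsNE_zero :
    Tendsto (deriv langevinSlope) (𝓝[≠] 0) (𝓝 0) :=
  tendsto_deriv_nhdsNE_zero_of_even meromorphicAt_langevinSlope_zero
    meromorphicOrderAt_langevinSlope_zero.ge even_langevinSlope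

lemma hasDerivAt_langevinSlope {y : ℝ} (hy : y ≠ 0) :
    HasDerivAt langevinSlope ((1 - coth y ^ 2 - coth y * y⁻¹ + 2 * y⁻¹ ^ 2) * y⁻¹) y := by
  have h : HasDerivAt langevinSlope _ y :=
    ((hasDerivAt_coth hy).sub ((hasDerivAt_const y 1).div (hasDerivAt_id y) hy)).div
      (hasDerivAt_id y) hy
  refine h.congr_deriv ?_
  simp only [Pi.sub_apply, Pi.div_apply, id]
  field_simp
  ring

lemma tendsto_deriv_langevinSlope_cobounded :
    Tendsto (deriv langevinSlope) (cobounded ℝ) (𝓝 0) := by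
  have hinv : (fun y : ℝ ↦ y⁻¹) =O[cobounded ℝ] (fun _ ↦ (1 : ℝ)) :=
    tendsto_inv₀_cobounded.isBigO_one ℝ
  have hbdd : (fun y ↦ 1 - coth y ^ 2 - coth y * y⁻¹ + 2 * y⁻¹ ^ 2) =O[cobounded ℝ]
      (fun _ ↦ (1 : ℝ)) := by
    have hsq : (fun y ↦ coth y ^ 2) =O[cobounded ℝ] (fun _ ↦ (1 : ℝ)) := by
      simpa using isBigO_coth_one.pow 2
    have hmul : (fun y ↦ coth y * y⁻¹) =O[cobounded ℝ] (fun _ ↦ (1 : ℝ)) := by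
      simpa using isBigO_coth_one.mul hinv
    have hinv_sq : (fun y : ℝ ↦ 2 * y⁻¹ ^ 2) =O[cobounded ℝ] (fun _ ↦ (1 : ℝ)) := by
      simpa using (hinv.pow 2).const_mul_left 2
    exact (((isBigO_refl _ _).sub hsq).sub hmul).add hinv_sq
  have hderiv : deriv langevinSlope =ᶠ[cobounded ℝ]
      fun y ↦ (1 - coth y ^ 2 - coth y * y⁻¹ + 2 * y⁻¹ ^ 2) * y⁻¹ := by
    filter_upwards [eventually_ne_cobounded 0] with y hy using (hasDerivAt_langevinSlope hy).deriv
  have hbig : deriv langevinSlope =O[cobounded ℝ] (fun y ↦ y⁻¹) := by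
    simpa using hderiv.trans_isBigO (hbdd.mul (isBigO_refl _ _))
  exact hbig.trans_tendsto tendsto_inv₀_cobounded

theorem alpha_deriv_limits_general (Ms : ℝ) {γ : ℝ} (hγ : γ ≠ 0) :
    Tendsto (deriv (alpha Ms γ)) (𝓝[≠] 0) (𝓝 0) ∧
    Tendsto (deriv (alpha Ms γ)) (cobounded ℝ) (𝓝 0) := by
  have hzero : Tendsto (γ * ·) (𝓝[≠] 0) (𝓝[≠] 0) :=
    ((Homeomorph.mulLeft₀ γ hγ).map_punctured_nhds_eq 0).trans_le (by simp)
  rw [deriv_alpha Ms hγ]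
  constructor
  · simpa using (tendsto_deriv_langevinSlope_nhdsNE_zero.comp hzero).const_mul (Ms * γ ^ 2)
  · simpa using (tendsto_deriv_langevinSlope_cobounded.comp
      (tendsto_mul_left_cobounded hγ)).const_mul (Ms * γ ^ 2)

theorem alpha_deriv_limits (Ms γ : ℝ) (hMs : 0 < Ms) (hγ : 0 < γ) :
    Filter.Tendsto (deriv (alpha Ms γ)) (nhdsWithin 0 (Set.Ioi 0)) (nhds 0) ∧
    Filter.Tendsto (deriv (alpha Ms γ)) Filter.atTop (nhds 0) :=
  (alpha_deriv_limits_general Ms hγ.ne').imp (·.mono_left (nhdsGT_le_nhdsNE 0))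
    (·.mono_left IsOrderBornology.atTop_le_cobounded)
end

section
/- There exists a positive constant C_α such that for all real x > 0, |α′(x)| ≤ C_α, where α(x) := 1 + (M_s/x)(coth(γx) − 1/(γx)) with fixed parameters M_s > 0 and γ > 0 (Lemma 2.1(i), second part). -/
/-! The Mittag-Leffler expansion of the cotangent, read on the imaginary axis, gives
`(coth y - 1 / y) / y = ∑ 2 / (y ^ 2 + (n π) ^ 2)` over `n ≥ 1`, so `alpha` is an affine image of a
rescaling of this even function. Differentiating termwise gives
`-∑ 4 y / (y ^ 2 + (n π) ^ 2) ^ 2`, and by AM-GM its `n`-th term is at most `2 / (n π) ^ 3` in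
absolute value, uniformly in `y`; the singularity at `0` has disappeared. -/

open Real

theorem hasDerivAt_two_div_sq_add_sq {a : ℝ} (ha : a ≠ 0) (y : ℝ) :
    HasDerivAt (fun t ↦ 2 / (t ^ 2 + a ^ 2)) (-(4 * y) / (y ^ 2 + a ^ 2) ^ 2) y := by
  have hden : HasDerivAt (fun t : ℝ ↦ t ^ 2 + a ^ 2) (2 * y) y := by
    simpa using (hasDerivAt_pow 2 y).add_const (a ^ 2)
  refine ((hasDerivAt_const y (2 : ℝ)).fun_div hden (by positivity)).congr_deriv ?_
  ring

theorem abs_four_mul_div_sq_add_sq_sq_le {a : ℝ} (ha : 0 < a) (y : ℝ) :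
    |-(4 * y) / (y ^ 2 + a ^ 2) ^ 2| ≤ 2 / a ^ 3 := by
  have amgm : 2 * |y| * a ≤ y ^ 2 + a ^ 2 := by
    simpa only [sq_abs] using two_mul_le_add_sq |y| a
  have hsq : a ^ 2 ≤ y ^ 2 + a ^ 2 := le_add_of_nonneg_left (sq_nonneg y)
  rw [abs_div, abs_neg, abs_mul, abs_of_pos (by positivity : (0 : ℝ) < 4),
    abs_of_pos (by positivity : 0 < (y ^ 2 + a ^ 2) ^ 2),
    div_le_div_iff₀ (by positivity) (by positivity)]
  calc 4 * |y| * a ^ 3 = 2 * ((2 * |y| * a) * a ^ 2) := by ring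
    _ ≤ 2 * ((y ^ 2 + a ^ 2) * (y ^ 2 + a ^ 2)) := by gcongr
    _ = 2 * (y ^ 2 + a ^ 2) ^ 2 := by ring

/-- The partial-fraction series of `(coth y - 1 / y) / y`, the quotient of the Langevin function by
its argument. As a series it also makes sense at `0`, where it fills the removable singularity. -/
noncomputable def langevinQuotient (y : ℝ) : ℝ := ∑' n : ℕ+, 2 / (y ^ 2 + (n * π) ^ 2)

theorem summable_const_div_pnat_mul_pi_pow (c : ℝ) {k : ℕ} (hk : 1 < k) :
    Summable fun n : ℕ+ ↦ c / ((n : ℝ) * π) ^ k := by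
  have hnat : Summable fun n : ℕ ↦ c / π ^ k * ((n : ℝ) ^ k)⁻¹ :=
    (summable_nat_pow_inv.mpr hk).mul_left _
  refine (hnat.comp_injective PNat.coe_injective).congr fun n ↦ ?_
  simp only [Function.comp_apply]
  field

theorem tsum_two_div_pnat_mul_pi_cube_pos : 0 < ∑' n : ℕ+, 2 / ((n : ℝ) * π) ^ 3 :=
  (summable_const_div_pnat_mul_pi_pow 2 (by norm_num)).tsum_pos (fun n ↦ by positivity) 1
    (by positivity)

theorem hasDerivAt_langevinQuotient (y : ℝ) :
    HasDerivAt langevinQuotient (∑' n : ℕ+, -(4 * y) / (y ^ 2 + (n * π) ^ 2) ^ 2) y := by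
  have summable_at_zero : Summable fun n : ℕ+ ↦ 2 / ((0 : ℝ) ^ 2 + (n * π) ^ 2) := by
    simpa using summable_const_div_pnat_mul_pi_pow 2 one_lt_two
  exact hasDerivAt_tsum (summable_const_div_pnat_mul_pi_pow 2 (by norm_num : 1 < 3))
    (fun n t ↦ hasDerivAt_two_div_sq_add_sq (a := n * π) (by positivity) t)
    (fun n t ↦ abs_four_mul_div_sq_add_sq_sq_le (a := n * π) (by positivity) t) summable_at_zero y

theorem abs_deriv_langevinQuotient_le (y : ℝ) :
    |deriv langevinQuotient y| ≤ ∑' n : ℕ+, 2 / ((n : ℝ) * π) ^ 3 := by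
  rw [(hasDerivAt_langevinQuotient y).deriv, ← norm_eq_abs]
  exact tsum_of_norm_bounded (summable_const_div_pnat_mul_pi_pow 2 (by norm_num : 1 < 3)).hasSum
    fun n ↦ abs_four_mul_div_sq_add_sq_sq_le (a := n * π) (by positivity) y

theorem cot_ofReal_mul_I (y : ℝ) : Complex.cot (y * Complex.I) = coth y * -Complex.I := by
  rw [Complex.cot, Complex.cos_mul_I, Complex.sin_mul_I, coth, ← div_div, Complex.div_I]
  push_cast
  ring

theorem ofReal_mul_I_mem_integerComplement {t : ℝ} (ht : t ≠ 0) :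
    (t * Complex.I : ℂ) ∈ Complex.integerComplement := by
  rintro ⟨n, hn⟩
  exact ht (by simpa using (congrArg Complex.im hn).symm)

theorem one_div_mul_I_sub_add_one_div_mul_I_add (t : ℝ) {a : ℝ} (ha : a ≠ 0) :
    1 / (t * Complex.I - a) + 1 / (t * Complex.I + a) =
      (2 * t / (t ^ 2 + a ^ 2) : ℝ) * -Complex.I := by
  have hsub : t * Complex.I - a ≠ 0 := fun h ↦ ha (by simpa using congrArg Complex.re h)
  have hadd : t * Complex.I + a ≠ 0 := fun h ↦ ha (by simpa using congrArg Complex.re h)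
  have hfactor : (t * Complex.I - a) * (t * Complex.I + a) = -(t ^ 2 + a ^ 2 : ℂ) := by
    linear_combination (t ^ 2 : ℂ) * Complex.I_sq
  rw [one_div_add_one_div hsub hadd, hfactor, div_neg]
  push_cast
  ring

theorem pi_mul_coth_pi_mul_eq_tsum {t : ℝ} (ht : t ≠ 0) :
    π * coth (π * t) = 1 / t + ∑' n : ℕ+, 2 * t / (t ^ 2 + n ^ 2) := by
  have hterm (n : ℕ+) : 1 / (t * Complex.I - n) + 1 / (t * Complex.I + n) =
      (2 * t / (t ^ 2 + n ^ 2) : ℝ) * -Complex.I :=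
    mod_cast one_div_mul_I_sub_add_one_div_mul_I_add t (a := n) (by positivity)
  have hcot := cot_series_rep (ofReal_mul_I_mem_integerComplement ht)
  rw [← mul_assoc, ← Complex.ofReal_mul, cot_ofReal_mul_I, tsum_congr hterm, tsum_mul_right,
    ← Complex.ofReal_tsum, ← div_div, Complex.div_I] at hcot
  apply Complex.ofReal_injective
  push_cast at hcot ⊢
  refine mul_right_cancel₀ (neg_ne_zero.mpr Complex.I_ne_zero) ?_
  linear_combination hcot

theorem coth_sub_one_div_eq_mul_langevinQuotient {y : ℝ} (hy : y ≠ 0) :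
    coth y - 1 / y = y * langevinQuotient y := by
  have hcoth := pi_mul_coth_pi_mul_eq_tsum (div_ne_zero hy pi_ne_zero)
  have hterm (n : ℕ+) : 2 * (y / π) / ((y / π) ^ 2 + n ^ 2) =
      π * y * (2 / (y ^ 2 + (n * π) ^ 2)) := by
    field
  rw [mul_div_cancel₀ y pi_ne_zero, tsum_congr hterm, tsum_mul_left, ← langevinQuotient] at hcoth
  field_simp at hcoth ⊢
  linear_combination hcoth

theorem alpha_eq_one_add_mul_langevinQuotient (Ms : ℝ) {γ x : ℝ} (hγ : γ ≠ 0) (hx : x ≠ 0) :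
    alpha Ms γ x = 1 + Ms * γ * langevinQuotient (γ * x) := by
  rw [alpha, coth_sub_one_div_eq_mul_langevinQuotient (mul_ne_zero hγ hx)]
  field

theorem hasDerivAt_alpha (Ms : ℝ) {γ x : ℝ} (hγ : γ ≠ 0) (hx : x ≠ 0) :
    HasDerivAt (alpha Ms γ) (Ms * γ ^ 2 * deriv langevinQuotient (γ * x)) x := by
  have hcomp : HasDerivAt (fun t ↦ langevinQuotient (γ * t))
      (deriv langevinQuotient (γ * x) * γ) x :=
    (hasDerivAt_langevinQuotient (γ * x)).differentiableAt.hasDerivAt.comp x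
      (hasDerivAt_const_mul γ)
  have hseries := (hcomp.const_mul (Ms * γ)).const_add 1
  refine (hseries.congr_of_eventuallyEq ?_).congr_deriv (by ring)
  filter_upwards [eventually_ne_nhds hx] with t ht
  exact alpha_eq_one_add_mul_langevinQuotient Ms hγ ht

theorem alpha_deriv_bounded_general (Ms : ℝ) {γ x : ℝ} (hγ : γ ≠ 0) (hx : x ≠ 0) :
    |deriv (alpha Ms γ) x| ≤ |Ms| * γ ^ 2 * ∑' n : ℕ+, 2 / ((n : ℝ) * π) ^ 3 := by
  rw [(hasDerivAt_alpha Ms hγ hx).deriv, abs_mul, abs_mul, abs_sq]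
  gcongr
  exact abs_deriv_langevinQuotient_le (γ * x)

theorem alpha_deriv_bounded (Ms γ : ℝ) (hMs : 0 < Ms) (hγ : 0 < γ) :
    ∃ Cα : ℝ, 0 < Cα ∧ ∀ x : ℝ, 0 < x → |deriv (alpha Ms γ) x| ≤ Cα := by
  have hscale : 0 < |Ms| * γ ^ 2 := by positivity
  exact ⟨_, mul_pos hscale tsum_two_div_pnat_mul_pi_cube_pos,
    fun x hx ↦ alpha_deriv_bounded_general Ms hγ.ne' hx.ne'⟩
end

section
/- Let Ω ⊆ ℝ^d be a measurable set (with Lebesgue measure), and let f, g, h : Ω → ℝ^d be measurable functions such that f(x) ≠ 0 and g(x) ≠ 0 for almost every x ∈ Ω, f is essentially bounded with essential supremum ‖f‖_∞, and f − g and h are square integrable on Ω. Let C_α > 0 be a constant such that |α′(x)| ≤ C_α for all x > 0. Then |∫_Ω (α(‖g(x)‖) − α(‖f(x)‖))·(f(x)·h(x)) dx| ≤ C_α·‖f‖_∞·(∫_Ω ‖f−g‖² dx)^{1/2}·(∫_Ω ‖h‖² dx)^{1/2}, where α(x) := 1 + (M_s/x)(coth(γx) − 1/(γx)) with fixed parameters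 M_s > 0, γ > 0 (the key estimate in the uniqueness proofs of Theorems 2.2 and 3.1, with f, g, h playing the roles of ∇φ, ∇φ̃, ∇τ). -/
open MeasureTheory

/-! On `(0, ∞)` the function `α` is differentiable with derivative bounded by `Cα`, so by the mean
value theorem it is `Cα`-Lipschitz there, and `v ↦ α ‖v‖` is `Cα`-Lipschitz away from the origin
because the norm is `1`-Lipschitz. The integrand is therefore at most
`Cα * ‖f‖_∞ * (‖f x - g x‖ * ‖h x‖)`, and Cauchy–Schwarz in `L²` gives the estimate. -/

open Set
open scoped NNReal

section Coefficient

variable {E : Type*} [NormedAddCommGroup E] {Ms γ x : ℝ} {C : ℝ≥0}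

theorem differentiableAt_coth (hx : x ≠ 0) : DifferentiableAt ℝ coth x :=
  Real.differentiableAt_cosh.div Real.differentiableAt_sinh (Real.sinh_ne_zero.2 hx)

theorem differentiableAt_alpha (hγ : γ ≠ 0) (hx : x ≠ 0) : DifferentiableAt ℝ (alpha Ms γ) x := by
  have hγx : γ * x ≠ 0 := mul_ne_zero hγ hx
  have h_coth : DifferentiableAt ℝ (fun t => coth (γ * t)) x :=
    DifferentiableAt.fun_comp' x (differentiableAt_coth hγx) (by fun_prop)
  unfold alpha
  fun_prop (disch := assumption)

theorem lipschitzOnWith_alpha (hγ : γ ≠ 0) (hderiv : ∀ t, 0 < t → |deriv (alpha Ms γ) t| ≤ C) :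
    LipschitzOnWith C (alpha Ms γ) (Ioi 0) :=
  (convex_Ioi 0).lipschitzOnWith_of_nnnorm_deriv_le
    (fun _ ht => differentiableAt_alpha hγ (ne_of_gt ht)) hderiv

theorem lipschitzOnWith_alpha_norm (hγ : γ ≠ 0)
    (hderiv : ∀ t, 0 < t → |deriv (alpha Ms γ) t| ≤ C) :
    LipschitzOnWith C (fun v : E => alpha Ms γ ‖v‖) {0}ᶜ := by
  have h_maps : MapsTo (norm : E → ℝ) {0}ᶜ (Ioi 0) := fun _ hv => norm_pos_iff.2 hv
  have h_comp := (lipschitzOnWith_alpha hγ hderiv).comp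
    lipschitzWith_one_norm.lipschitzOnWith h_maps
  rwa [mul_one] at h_comp

end Coefficient

section LipschitzComposition

variable {X Y : Type*} [MeasurableSpace X] {μ : Measure X} [PseudoMetricSpace Y]

theorem aestronglyMeasurable_comp_of_lipschitzOnWith {a : Y → ℝ} {S : Set Y} {C : ℝ≥0} {f : X → Y}
    (ha : LipschitzOnWith C a S) (hf : AEStronglyMeasurable f μ) (hfS : ∀ᵐ x ∂μ, f x ∈ S) :
    AEStronglyMeasurable (fun x => a (f x)) μ := by
  obtain ⟨b, hb, hab⟩ := ha.extend_real
  refine (hb.continuous.comp_aestronglyMeasurable hf).congr ?_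
  filter_upwards [hfS] with x hx using (hab hx).symm

end LipschitzComposition

section CauchySchwarz

variable {X E F : Type*} [MeasurableSpace X] {μ : Measure X}
  [NormedAddCommGroup E] [NormedAddCommGroup F]

theorem integral_norm_mul_norm_le_sqrt_mul_sqrt {f : X → E} {g : X → F}
    (hf : MemLp f 2 μ) (hg : MemLp g 2 μ) :
    ∫ x, ‖f x‖ * ‖g x‖ ∂μ ≤ √(∫ x, ‖f x‖ ^ 2 ∂μ) * √(∫ x, ‖g x‖ ^ 2 ∂μ) := by
  have holder := integral_mul_norm_le_Lp_mul_Lq Real.HolderConjugate.two_two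
    (by simpa using hf.norm) (by simpa using hg.norm)
  simpa only [norm_norm, Real.rpow_two, ← Real.sqrt_eq_rpow] using holder

end CauchySchwarz

section KeyEstimate

variable {X E : Type*} [MeasurableSpace X] {μ : Measure X}
  [NormedAddCommGroup E] [InnerProductSpace ℝ E] {a : E → ℝ} {S : Set E} {C : ℝ≥0}

theorem norm_sub_mul_inner_le_of_lipschitzOnWith (ha : LipschitzOnWith C a S) {u v : E}
    (hu : u ∈ S) (hv : v ∈ S) {M : ℝ} (huM : ‖u‖ ≤ M) (w : E) :
    ‖(a v - a u) * inner ℝ u w‖ ≤ C * M * (‖u - v‖ * ‖w‖) :=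
  calc ‖(a v - a u) * inner ℝ u w‖
      = ‖a v - a u‖ * ‖inner ℝ u w‖ := norm_mul _ _
    _ ≤ (C * ‖v - u‖) * (‖u‖ * ‖w‖) :=
        mul_le_mul (ha.norm_sub_le hv hu) (norm_inner_le_norm u w) (by positivity) (by positivity)
    _ ≤ (C * ‖v - u‖) * (M * ‖w‖) := by gcongr
    _ = C * M * (‖u - v‖ * ‖w‖) := by rw [norm_sub_rev]; ring

theorem uniqueness_key_estimate_general (ha : LipschitzOnWith C a S) {f g h : X → E}
    (hf : AEStronglyMeasurable f μ) (hfS : ∀ᵐ x ∂μ, f x ∈ S) (hgS : ∀ᵐ x ∂μ, g x ∈ S)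
    {M : ℝ} (hfM : ∀ᵐ x ∂μ, ‖f x‖ ≤ M) (hfg : MemLp (f - g) 2 μ) (hh : MemLp h 2 μ) :
    Integrable (fun x => (a (g x) - a (f x)) * inner ℝ (f x) (h x)) μ ∧
      |∫ x, (a (g x) - a (f x)) * inner ℝ (f x) (h x) ∂μ| ≤
        C * M * √(∫ x, ‖f x - g x‖ ^ 2 ∂μ) * √(∫ x, ‖h x‖ ^ 2 ∂μ) := by
  have hg : AEStronglyMeasurable g μ := by
    simpa only [sub_sub_cancel] using hf.sub hfg.aestronglyMeasurable
  have h_meas : AEStronglyMeasurable (fun x => (a (g x) - a (f x)) * inner ℝ (f x) (h x)) μ :=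
    ((aestronglyMeasurable_comp_of_lipschitzOnWith ha hg hgS).sub
      (aestronglyMeasurable_comp_of_lipschitzOnWith ha hf hfS)).mul
      (hf.inner hh.aestronglyMeasurable)
  have h_bound : ∀ᵐ x ∂μ, ‖(a (g x) - a (f x)) * inner ℝ (f x) (h x)‖ ≤
      C * M * (‖f x - g x‖ * ‖h x‖) := by
    filter_upwards [hfS, hgS, hfM] with x hfx hgx hMx
    exact norm_sub_mul_inner_le_of_lipschitzOnWith ha hfx hgx hMx (h x)
  have h_dom : Integrable (fun x => C * M * (‖f x - g x‖ * ‖h x‖)) μ :=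
    (hfg.norm.integrable_mul hh.norm).const_mul _
  refine ⟨h_dom.mono' h_meas h_bound, ?_⟩
  obtain rfl | _ := eq_zero_or_neZero μ
  · simp
  obtain ⟨x, hMx⟩ := hfM.exists
  have hM : 0 ≤ M := (norm_nonneg _).trans hMx
  calc |∫ x, (a (g x) - a (f x)) * inner ℝ (f x) (h x) ∂μ|
      ≤ ∫ x, C * M * (‖f x - g x‖ * ‖h x‖) ∂μ := norm_integral_le_of_norm_le h_dom h_bound
    _ = C * M * ∫ x, ‖f x - g x‖ * ‖h x‖ ∂μ := integral_const_mul _ _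
    _ ≤ C * M * (√(∫ x, ‖f x - g x‖ ^ 2 ∂μ) * √(∫ x, ‖h x‖ ^ 2 ∂μ)) := by
        gcongr
        exact integral_norm_mul_norm_le_sqrt_mul_sqrt hfg hh
    _ = C * M * √(∫ x, ‖f x - g x‖ ^ 2 ∂μ) * √(∫ x, ‖h x‖ ^ 2 ∂μ) := (mul_assoc _ _ _).symm

end KeyEstimate

theorem uniqueness_key_estimate (d : ℕ) (Ms γ : ℝ) (hMs : 0 < Ms) (hγ : 0 < γ)
    (Ω : Set (EuclideanSpace ℝ (Fin d))) (hΩ : MeasurableSet Ω)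
    (f g h : EuclideanSpace ℝ (Fin d) → EuclideanSpace ℝ (Fin d))
    (hf : Measurable f) (hg : Measurable g) (hh : Measurable h)
    (hfne : ∀ᵐ x ∂(volume.restrict Ω), f x ≠ 0)
    (hgne : ∀ᵐ x ∂(volume.restrict Ω), g x ≠ 0)
    (finf : ℝ) (hfinf : ∀ᵐ x ∂(volume.restrict Ω), ‖f x‖ ≤ finf)
    (hfg : IntegrableOn (fun x => ‖f x - g x‖ ^ 2) Ω)
    (hh2 : IntegrableOn (fun x => ‖h x‖ ^ 2) Ω)
    (Cα : ℝ) (hCα : 0 < Cα)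
    (hbound : ∀ x : ℝ, 0 < x → |deriv (alpha Ms γ) x| ≤ Cα) :
    |∫ x in Ω, (alpha Ms γ ‖g x‖ - alpha Ms γ ‖f x‖) * (inner ℝ (f x) (h x) : ℝ)| ≤
      Cα * finf * Real.sqrt (∫ x in Ω, ‖f x - g x‖ ^ 2) *
        Real.sqrt (∫ x in Ω, ‖h x‖ ^ 2) := by
  lift Cα to ℝ≥0 using hCα.le
  exact (uniqueness_key_estimate_general (lipschitzOnWith_alpha_norm hγ.ne' hbound)
    hf.aestronglyMeasurable hfne hgne hfinf
    ((memLp_two_iff_integrable_sq_norm (hf.sub hg).aestronglyMeasurable).2 hfg)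
    ((memLp_two_iff_integrable_sq_norm hh.aestronglyMeasurable).2 hh2)).2
end

section
/- Fix real parameters M_s > 0 and γ > 0. Let H : ℝ³ → ℝ³ be differentiable at a point x₀ with H(x₀) ≠ 0, and suppose its Jacobian at x₀ is symmetric, i.e. ∂_j H_i(x₀) = ∂_i H_j(x₀) for all i, j (equivalently, curl H(x₀) = 0). Define the Langevin magnetization M(x) := M_s·(coth(γ‖H(x)‖) − 1/(γ‖H(x)‖))·H(x)/‖H(x)‖ (where H(x) ≠ 0) and β(s) := (M_s/γ)·ln(sinh(γs)/s) for s > 0. Then the function x ↦ β(‖H(x)‖) is differentiable at x₀ and, for each i, ∑_{j=1}^{3} M_j(x₀)·∂_j H_i(x₀) = ∂_i(β(‖H‖))(x₀); that is, (M·∇)H at x₀ equals the gradient at x₀ of β(‖H‖) (identity (2.8) of the paper, the Kelvin force as a gradient). -/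
noncomputable def beta (Ms γ s : ℝ) : ℝ := Ms / γ * Real.log (Real.sinh (γ * s) / s)

/-!
The gradient of a radial function `φ ‖H‖` is `(DH)ᵀ` applied to `φ' ‖H‖ • H / ‖H‖`. For `φ = β`
this last vector is the Langevin magnetization `M`, because `β'` is the Langevin function, and
`curl H = 0` means `(DH)ᵀ = DH`; so the gradient is `DH M = (M·∇)H`.
-/

open ContinuousLinearMap InnerProductSpace

section Coordinates

variable {𝕜 ι : Type*} [RCLike 𝕜] [Fintype ι] [DecidableEq ι]

theorem map_euclideanSpace_eq_sum_smul_single {V : Type*} [AddCommGroup V] [Module 𝕜 V]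
    (A : EuclideanSpace 𝕜 ι →ₗ[𝕜] V) (v : EuclideanSpace 𝕜 ι) :
    A v = ∑ j, v j • A (EuclideanSpace.single j 1) := by
  conv_lhs => rw [← (EuclideanSpace.basisFun ι 𝕜).sum_repr v]
  simp only [map_sum, map_smul, EuclideanSpace.basisFun_repr, EuclideanSpace.basisFun_apply]

theorem isSelfAdjoint_iff_apply_single_eq_star
    {A : EuclideanSpace 𝕜 ι →L[𝕜] EuclideanSpace 𝕜 ι} :
    IsSelfAdjoint A ↔ ∀ i j,
      A (EuclideanSpace.single j 1) i = star (A (EuclideanSpace.single i 1) j) := by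
  rw [isSelfAdjoint_iff_isSymmetric,
    ← LinearMap.isHermitian_toMatrix_iff (EuclideanSpace.basisFun ι 𝕜), Matrix.IsHermitian.ext_iff]
  simp [LinearMap.toMatrix_apply, eq_comm]

theorem apply_eq_fderiv_single_of_hasGradientAt {f : EuclideanSpace ℝ ι → ℝ}
    {g x : EuclideanSpace ℝ ι} (h : HasGradientAt f g x) (i : ι) :
    g i = fderiv ℝ f x (EuclideanSpace.single i 1) := by
  rw [h.hasFDerivAt.fderiv, toDual_apply_apply, EuclideanSpace.inner_single_right]
  simp

end Coordinates

section RadialFunctions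

variable {E F : Type*} [NormedAddCommGroup E] [InnerProductSpace ℝ E]
  [NormedAddCommGroup F] [InnerProductSpace ℝ F]

theorem hasFDerivAt_norm_of_ne_zero {y : F} (hy : y ≠ 0) :
    HasFDerivAt (fun z : F => ‖z‖) (‖y‖⁻¹ • innerSL ℝ y) y := by
  have hsqrt := (hasStrictFDerivAt_norm_sq y).hasFDerivAt.sqrt (by positivity)
  simp only [Real.sqrt_sq (norm_nonneg _)] at hsqrt
  refine hsqrt.congr_fderiv ?_
  rw [← Nat.cast_smul_eq_nsmul ℝ, smul_smul]
  congr 1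
  push_cast
  field_simp

theorem hasGradientAt_comp_norm [CompleteSpace E] [CompleteSpace F]
    {H : E → F} {H' : E →L[ℝ] F} {x : E} {φ : ℝ → ℝ} {φ' : ℝ}
    (hφ : HasDerivAt φ φ' ‖H x‖) (hH : HasFDerivAt H H' x) (hne : H x ≠ 0) :
    HasGradientAt (fun y => φ ‖H y‖) (adjoint H' ((φ' / ‖H x‖) • H x)) x := by
  have hcomp := hφ.comp_hasFDerivAt x ((hasFDerivAt_norm_of_ne_zero hne).comp x hH)
  refine hasGradientAt_iff_hasFDerivAt.2 (hcomp.congr_fderiv ?_)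
  ext v
  simp [adjoint_inner_left, div_eq_mul_inv, mul_assoc]

end RadialFunctions

theorem hasDerivAt_beta (Ms : ℝ) {γ s : ℝ} (hγ : γ ≠ 0) (hs : s ≠ 0) :
    HasDerivAt (beta Ms γ) (Ms * (coth (γ * s) - 1 / (γ * s))) s := by
  have hsinh : Real.sinh (γ * s) ≠ 0 := Real.sinh_ne_zero.2 (mul_ne_zero hγ hs)
  have hquot : HasDerivAt (fun t => Real.sinh (γ * t) / t)
      ((Real.cosh (γ * s) * γ * s - Real.sinh (γ * s)) / s ^ 2) s := by
    simpa using ((hasDerivAt_id s).const_mul γ).sinh.fun_div (hasDerivAt_id s) hs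
  refine ((hquot.log (div_ne_zero hsinh hs)).const_mul (Ms / γ)).congr_deriv ?_
  rw [coth]
  field_simp

/-- The Langevin magnetization `M_s (coth (γ‖h‖) - 1 / (γ‖h‖)) h / ‖h‖` produced by a magnetic
field `h`. At `h = 0` it takes the value `0`, which is also its limit there. -/
noncomputable def langevinMagnetization {E : Type*} [NormedAddCommGroup E] [NormedSpace ℝ E]
    (Ms γ : ℝ) (h : E) : E :=
  (Ms * (coth (γ * ‖h‖) - 1 / (γ * ‖h‖)) / ‖h‖) • h

theorem kelvin_force_as_gradient_general {E : Type*} [NormedAddCommGroup E]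
    [InnerProductSpace ℝ E] [CompleteSpace E] (Ms : ℝ) {γ : ℝ} (hγ : 0 < γ)
    {H : E → E} {H' : E →L[ℝ] E} {x₀ : E} (hH : HasFDerivAt H H' x₀) (hne : H x₀ ≠ 0)
    (hsym : IsSelfAdjoint H') :
    HasGradientAt (fun x => beta Ms γ ‖H x‖) (H' (langevinMagnetization Ms γ (H x₀))) x₀ := by
  have hgrad := hasGradientAt_comp_norm (hasDerivAt_beta Ms hγ.ne' (norm_ne_zero_iff.2 hne)) hH hne
  rwa [hsym.adjoint_eq] at hgrad

theorem kelvin_force_as_gradient (Ms γ : ℝ) (hMs : 0 < Ms) (hγ : 0 < γ)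
    (H M : EuclideanSpace ℝ (Fin 3) → EuclideanSpace ℝ (Fin 3))
    (x₀ : EuclideanSpace ℝ (Fin 3))
    (hH : DifferentiableAt ℝ H x₀) (hne : H x₀ ≠ 0)
    (hsym : ∀ i j : Fin 3,
      fderiv ℝ H x₀ (EuclideanSpace.single j 1) i =
        fderiv ℝ H x₀ (EuclideanSpace.single i 1) j)
    (hM : ∀ x, H x ≠ 0 →
      M x = (Ms * (coth (γ * ‖H x‖) - 1 / (γ * ‖H x‖)) / ‖H x‖) • H x) :
    DifferentiableAt ℝ (fun x => beta Ms γ ‖H x‖) x₀ ∧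
    ∀ i : Fin 3,
      ∑ j : Fin 3, M x₀ j * fderiv ℝ H x₀ (EuclideanSpace.single j 1) i =
        fderiv ℝ (fun x => beta Ms γ ‖H x‖) x₀ (EuclideanSpace.single i 1) := by
  have hgrad := kelvin_force_as_gradient_general Ms hγ hH.hasFDerivAt hne
    (isSelfAdjoint_iff_apply_single_eq_star.2 hsym)
  rw [langevinMagnetization, ← hM x₀ hne] at hgrad
  refine ⟨hgrad.differentiableAt, fun i => ?_⟩
  rw [← apply_eq_fderiv_single_of_hasGradientAt hgrad i, ← coe_coe,
    map_euclideanSpace_eq_sum_smul_single]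
  simp
end
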